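/- Let (J₁, B₁) be a pseudo-euclidean Jordan algebra over a field K of characteristic zero, let (D, x₀) ∈ End(J₁) × J₁ be an admissible pair with D B₁-symmetric (B₁(D(x), y) = B₁(x, D(y)) for all x, y), and let k ∈ K. Then the vector space J̃ = Ka ⊕ J₁ ⊕ Kb endowed with the product determined by: b⋆J̃ = J̃⋆b = {0}, a⋆a = x₀ + kb, x⋆y = xy + B₁(D(x), y)b, and a⋆x = x⋆a = D(x) + B₁(x₀, x)b for x, y ∈ J₁, together with the symmetric bilinear form B defined by B = B₁ on J₁ × J₁, B(a, b) = 1, B(a, J₁) = B(b, J₁) = {0}, B(a, a) = B(b, b) = 0, is a pseudo-euclidean Jordan algebra (this is the generalized double extension of (J₁, B₁) by the one-dimensional algebra with zero product by means of (D, x₀, k)). -/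

import Mathlib

variable {K : Type*} [Field K] [CharZero K]
variable {J : Type*} [NonUnitalNonAssocCommRing J] [Module K J]
  [SMulCommClass K J J] [IsScalarTower K J J] [FiniteDimensional K J]

/-- The generalized double extension product on `K·a ⊕ J ⊕ K·b`: an element `(α, x, β)`
represents `α a + x + β b`;
`b ⋆ J̃ = {0}`, `a ⋆ a = x₀ + k b`, `x ⋆ y = xy + B₁(Dx, y) b`,
`a ⋆ x = Dx + B₁(x₀, x) b`. -/
def gdeMul (B₁ : J →ₗ[K] J →ₗ[K] K) (D : Module.End K J) (x₀ : J) (k : K)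
    (p q : K × J × K) : K × J × K :=
  (0,
    (p.1 * q.1) • x₀ + p.1 • D q.2.1 + q.1 • D p.2.1 + p.2.1 * q.2.1,
    p.1 * q.1 * k + p.1 * B₁ x₀ q.2.1 + q.1 * B₁ x₀ p.2.1 + B₁ (D p.2.1) q.2.1)

/-- The bilinear form on `K·a ⊕ J ⊕ K·b` extending `B₁` with `B(a,b) = 1`,
`B(a,a) = B(b,b) = 0` and `a, b ⟂ J`. -/
def gdeForm (B₁ : J →ₗ[K] J →ₗ[K] K) (p q : K × J × K) : K :=
  B₁ p.2.1 q.2.1 + p.1 * q.2.2 + q.1 * p.2.2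

/-- The part of the Jordan identity for `p = α a + x` that is linear in the coefficient of `a`
in the second argument; the square of `p` is represented by `α² x₀ + 2 α D x + x²`. -/
lemma gde_jordan_left {D : Module.End K J} {x₀ : J}
    (hC4 : ∀ x : J, x * D (x * x) = (x * x) * D x)
    (hC5 : ∀ x : J, D (D (x * x)) =
      2 • (D x * D x) - 2 • (x * D (D x)) + x₀ * (x * x))
    (hC6 : ∀ x : J, D (D (D x)) =
      ((3 : K) / 2) • (x₀ * D x) - ((1 : K) / 2) • (x * D x₀))
    (hC7 : D (D x₀) = x₀ * x₀) (α : K) (x : J) :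
    (α • x₀ + D x) * ((α * α) • x₀ + α • D x + α • D x + x * x) =
      α • D (D ((α * α) • x₀ + α • D x + α • D x + x * x)) +
        x * D ((α * α) • x₀ + α • D x + α • D x + x * x) := by
  simp only [map_add, map_smul, mul_add, add_mul, smul_mul_assoc, mul_smul_comm, hC4, hC5, hC6,
    hC7, mul_comm (D x) x₀, mul_comm (D x) (x * x)]
  module

/-- The part of the Jordan identity for `p = α a + x` whose second argument `y` lies in `J`. -/
lemma gde_jordan_right {D : Module.End K J} {x₀ : J}
    (hjordan : ∀ x y : J, (x * y) * (x * x) = x * (y * (x * x)))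
    (hC1 : ∀ x y : J, D ((x * x) * y) =
      (x * x) * D y + 2 • (D x * (x * y)) - 2 • (x * (D x * y)))
    (hC2 : ∀ x y : J, D x * D y - D (D x * y) =
      ((1 : K) / 2) • ((x₀ * y) * x - x₀ * (y * x)))
    (hC3 : ∀ x : J, D (x₀ * x) = x₀ * D x) (α : K) (x y : J) :
    (α • D y + x * y) * ((α * α) • x₀ + α • D x + α • D x + x * x) =
      α • D (y * ((α * α) • x₀ + α • D x + α • D x + x * x)) +
        x * (y * ((α * α) • x₀ + α • D x + α • D x + x * x)) := by
  have h₁ := hC1 x y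
  have h₂ := hC2 x y
  have h₃ := hC3 y
  have h₄ := hjordan x y
  rw [mul_comm y (x * x)] at h₄
  rw [mul_comm y x, mul_comm (x₀ * y) x] at h₂
  simp only [map_add, map_smul, mul_add, add_mul, smul_mul_assoc, mul_smul_comm,
    mul_comm y x₀, mul_comm y (D x), mul_comm y (x * x), mul_comm (D y) x₀, mul_comm (D y) (D x),
    mul_comm (D y) (x * x), mul_comm (x * y) x₀, mul_comm (x * y) (D x)]
  linear_combination (norm := module) h₄ - α • h₁ + (2 * α ^ 2) • h₂ - α ^ 3 • h₃

/-- the generalized double extension of a pseudo-euclidean Jordan algebra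
`(J₁, B₁)` by the one-dimensional algebra with zero product, by means of an admissible
pair `(D, x₀)` with `D` `B₁`-symmetric and `k ∈ K`, is a pseudo-euclidean Jordan algebra. -/
theorem generalized_double_extension_pseudoEuclidean
    (hjordan : ∀ x y : J, (x * y) * (x * x) = x * (y * (x * x)))
    (B₁ : J →ₗ[K] J →ₗ[K] K)
    (hsymm : ∀ x y : J, B₁ x y = B₁ y x)
    (hnondeg : ∀ x : J, (∀ y : J, B₁ x y = 0) → x = 0)
    (hassoc : ∀ x y z : J, B₁ (x * y) z = B₁ x (y * z))
    (D : Module.End K J) (x₀ : J) (k : K)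
    (hDsymm : ∀ x y : J, B₁ (D x) y = B₁ x (D y))
    -- (C1)–(C7): `(D, x₀)` is an admissible pair
    (hC1 : ∀ x y : J, D ((x * x) * y) =
      (x * x) * D y + 2 • (D x * (x * y)) - 2 • (x * (D x * y)))
    (hC2 : ∀ x y : J, D x * D y - D (D x * y) =
      ((1 : K) / 2) • ((x₀ * y) * x - x₀ * (y * x)))
    (hC3 : ∀ x : J, D (x₀ * x) = x₀ * D x)
    (hC4 : ∀ x : J, x * D (x * x) = (x * x) * D x)
    (hC5 : ∀ x : J, D (D (x * x)) =
      2 • (D x * D x) - 2 • (x * D (D x)) + x₀ * (x * x))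
    (hC6 : ∀ x : J, D (D (D x)) =
      ((3 : K) / 2) • (x₀ * D x) - ((1 : K) / 2) • (x * D x₀))
    (hC7 : D (D x₀) = x₀ * x₀) :
    -- the product is commutative and satisfies the Jordan identity
    ((∀ p q : K × J × K, gdeMul B₁ D x₀ k p q = gdeMul B₁ D x₀ k q p) ∧
      (∀ p q : K × J × K,
        gdeMul B₁ D x₀ k (gdeMul B₁ D x₀ k p q) (gdeMul B₁ D x₀ k p p) =
          gdeMul B₁ D x₀ k p (gdeMul B₁ D x₀ k q (gdeMul B₁ D x₀ k p p)))) ∧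
    -- and the bilinear form is an associative scalar product
    ((∀ p q : K × J × K, gdeForm B₁ p q = gdeForm B₁ q p) ∧
      (∀ p : K × J × K, (∀ q, gdeForm B₁ p q = 0) → p = 0) ∧
      (∀ p q s : K × J × K,
        gdeForm B₁ (gdeMul B₁ D x₀ k p q) s = gdeForm B₁ p (gdeMul B₁ D x₀ k q s))) := by
  refine ⟨⟨fun p q => ?_, ?_⟩, fun p q => ?_, fun p hp => ?_, ?_⟩
  · simp only [gdeMul, Prod.mk.injEq, true_and]
    constructor
    · rw [mul_comm q.1 p.1, mul_comm q.2.1 p.2.1]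
      abel
    · rw [hDsymm q.2.1, hsymm q.2.1]
      ring
  · rintro ⟨α, x, β⟩ ⟨γ, y, δ⟩
    have hl := gde_jordan_left hC4 hC5 hC6 hC7 α x
    have hr := gde_jordan_right hjordan hC1 hC2 hC3 α x y
    simp only [gdeMul, zero_mul, mul_zero, zero_smul, zero_add, add_zero, Prod.mk.injEq, true_and]
    generalize (α * α) • x₀ + α • D x + α • D x + x * x = v at hl hr ⊢
    constructor
    · simp only [map_add, map_smul, mul_add, add_mul, smul_mul_assoc, mul_smul_comm] at hl hr ⊢
      linear_combination (norm := module) γ • hl + hr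
    · have h₁ := congrArg (fun z => B₁ z y) hl
      have h₂ : B₁ (D (D y)) v = B₁ (D (D v)) y := by rw [hDsymm, hDsymm, hsymm]
      have h₃ : B₁ (D (x * y)) v = B₁ (x * D v) y := by
        rw [hDsymm, mul_comm x y, hassoc, hsymm]
      have h₄ : B₁ (x₀ * v) y = B₁ x₀ (y * v) := by rw [hassoc, mul_comm v y]
      have h₅ : B₁ (D x * v) y = B₁ (D x) (y * v) := by rw [hassoc, mul_comm v y]
      have h₆ := hDsymm x₀ v
      have h₇ := hDsymm (D x) v
      simp only [map_add, map_smul, add_mul, smul_mul_assoc, LinearMap.add_apply,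
        LinearMap.smul_apply, smul_eq_mul] at h₁ ⊢
      linear_combination -h₁ + α * h₂ + h₃ + α * h₄ + h₅ + α * γ * h₆ + γ * h₇
  · simp only [gdeForm]
    rw [hsymm]
    ring
  · obtain ⟨α, x, β⟩ := p
    have hβ := hp (1, 0, 0)
    have hα := hp (0, 0, 1)
    have hx := hnondeg x fun y => by simpa [gdeForm] using hp (0, y, 0)
    simp only [gdeForm, map_zero, mul_zero, zero_mul, mul_one, one_mul, zero_add, add_zero]
      at hα hβ
    simp [hα, hβ, hx]
  · rintro ⟨α, x, β⟩ ⟨γ, y, δ⟩ ⟨ε, z, ζ⟩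
    simp only [gdeForm, gdeMul, map_add, map_smul, LinearMap.add_apply, LinearMap.smul_apply,
      smul_eq_mul, hassoc, hDsymm, hsymm x x₀]
    ring
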